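/- Let H be a complex Hilbert space, d ≥ 2, and A = (A_1,…,A_d) a commuting row contraction on H. Let N = {n ∈ ℕ^d : A^n = 0} and X = ℕ^d∖N. Then for every complex polynomial Q in d variables, ‖Q(A)‖ ≤ ‖Q(B^X)‖ ≤ inf{ ‖φ‖_{M(H_d)} : φ a multiplier of H_d whose Taylor coefficients satisfy φ̂(n) = Q̂(n) for all n ∈ X }. -/

import Mathlib

open scoped BigOperators ComplexConjugate

noncomputable section

namespace DruryArveson

/-- Multi-indices. -/
abbrev Idx (d : ℕ) := Fin d → ℕ

/-- The weight `β(n) = |n|!/n!`. -/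
def beta (d : ℕ) (n : Idx d) : ℝ :=
  ((∑ j, n j).factorial : ℝ) / ∏ j, ((n j).factorial : ℝ)

/-- standard basis multi-index `e_j`. -/
def e (d : ℕ) (j : Fin d) : Idx d := fun i => if i = j then 1 else 0

/-- A set `X ⊆ ℕ^d` is monotone if its complement is shift invariant. -/
def MonotoneSet (d : ℕ) (X : Set (Idx d)) : Prop :=
  ∀ n, n ∉ X → ∀ j, n + e d j ∉ X

/-- membership in the Drury–Arveson space (coefficientwise). -/
def MemHd (d : ℕ) (a : Idx d → ℂ) : Prop :=
  Summable fun n => ‖a n‖ ^ 2 / beta d n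

/-- the Drury–Arveson norm. -/
def hdNorm (d : ℕ) (a : Idx d → ℂ) : ℝ :=
  Real.sqrt (∑' n, ‖a n‖ ^ 2 / beta d n)

/-- the Drury–Arveson inner product. -/
def hdInner (d : ℕ) (a b : Idx d → ℂ) : ℂ :=
  ∑' n, a n * conj (b n) / (beta d n : ℂ)

/-- membership in `H_d(X)`. -/
def MemHdX (d : ℕ) (X : Set (Idx d)) (a : Idx d → ℂ) : Prop :=
  (∀ n ∉ X, a n = 0) ∧ MemHd d a

/-- membership in `ℓ²(X, β)`. -/
def MemL2 (d : ℕ) (X : Set (Idx d)) (g : Idx d → ℂ) : Prop :=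
  (∀ n ∉ X, g n = 0) ∧ Summable fun n => ‖g n‖ ^ 2 * beta d n

/-- the norm of `ℓ²(ℕ^d, β)`. -/
def l2Norm (d : ℕ) (g : Idx d → ℂ) : ℝ :=
  Real.sqrt (∑' n, ‖g n‖ ^ 2 * beta d n)

/-- the inner product of `ℓ²(ℕ^d, β)`. -/
def l2Inner (d : ℕ) (g h : Idx d → ℂ) : ℂ :=
  ∑' n, g n * conj (h n) * (beta d n : ℂ)

/-- the compressed backshift `B_j^X = P_X B_j|_{ℓ²(X,β)}`. -/
def BXop (d : ℕ) (X : Set (Idx d)) (j : Fin d) (g : Idx d → ℂ) : Idx d → ℂ :=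
  X.indicator fun n => g (n + e d j)

/-- ordered power `(T_1)^{k_1} ∘ ⋯ ∘ (T_d)^{k_d}` of a `d`-tuple of maps. -/
def opPow (d : ℕ) {α : Type*} (T : Fin d → (α → α)) (k : Idx d) : α → α :=
  (List.ofFn fun j => (T j)^[k j]).foldr (· ∘ ·) id

/-- multiplication by `z_j` on coefficients. -/
def Mop (d : ℕ) (j : Fin d) (a : Idx d → ℂ) : Idx d → ℂ :=
  fun n => if 0 < n j then a (n - e d j) else 0

/-- the compressed multiplication `M_j^X = P_X M_j|_{H_d(X)}`. -/
def MopX (d : ℕ) (X : Set (Idx d)) (j : Fin d) (a : Idx d → ℂ) : Idx d → ℂ :=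
  X.indicator (Mop d j a)

/-- the Taylor coefficients of a polynomial of `d` variables. -/
def Qhat (d : ℕ) (Q : MvPolynomial (Fin d) ℂ) (n : Idx d) : ℂ :=
  Q.coeff (Finsupp.equivFunOnFinite.symm n)

/-- `Q(T)` for a `d`-tuple of maps on the coefficient space. -/
def polyOp (d : ℕ) (Q : MvPolynomial (Fin d) ℂ)
    (T : Fin d → ((Idx d → ℂ) → (Idx d → ℂ))) (a : Idx d → ℂ) : Idx d → ℂ :=
  fun n => ∑ k ∈ Q.support, Q.coeff k * opPow d T (⇑k) a n

/-- operator norm of a map with respect to the `ℓ²(X,β)` norm. -/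
def opNormL2 (d : ℕ) (X : Set (Idx d)) (T : (Idx d → ℂ) → (Idx d → ℂ)) : ℝ :=
  sInf {C | 0 ≤ C ∧ ∀ g, MemL2 d X g → l2Norm d (T g) ≤ C * l2Norm d g}

/-- operator norm of a map with respect to the `H_d(X)` norm. -/
def opNormHdX (d : ℕ) (X : Set (Idx d)) (T : (Idx d → ℂ) → (Idx d → ℂ)) : ℝ :=
  sInf {C | 0 ≤ C ∧ ∀ a, MemHdX d X a → hdNorm d (T a) ≤ C * hdNorm d a}

/-- coefficients of the product `φ · f` of two power series. -/
def mconv (d : ℕ) (φ a : Idx d → ℂ) (m : Idx d) : ℂ :=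
  ∑ k ∈ Finset.Iic m, φ k * a (m - k)

/-- `φ` is a multiplier of `H_d`. -/
def IsMultiplier (d : ℕ) (φ : Idx d → ℂ) : Prop :=
  ∀ a, MemHd d a → MemHd d (mconv d φ a)

/-- the multiplier norm `‖φ‖_{M(H_d)}`. -/
def multNorm (d : ℕ) (φ : Idx d → ℂ) : ℝ :=
  sInf {C | 0 ≤ C ∧ ∀ a, MemHd d a → hdNorm d (mconv d φ a) ≤ C * hdNorm d a}

/-- `A^n = A_1^{n_1} ⋯ A_d^{n_d}` for a tuple of bounded operators. -/
def ApowCLM (d : ℕ) {H : Type*} [NormedAddCommGroup H] [NormedSpace ℂ H]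
    (A : Fin d → H →L[ℂ] H) (n : Idx d) : H →L[ℂ] H :=
  (List.ofFn fun j => A j ^ n j).prod

/-- `Q(A) = ∑ c_k A^k` for a tuple of bounded operators. -/
def QevalCLM (d : ℕ) {H : Type*} [NormedAddCommGroup H] [NormedSpace ℂ H]
    (A : Fin d → H →L[ℂ] H) (Q : MvPolynomial (Fin d) ℂ) : H →L[ℂ] H :=
  ∑ k ∈ Q.support, Q.coeff k • ApowCLM d A ⇑k

/-- monomial `z^n`. -/
def mpow (d : ℕ) (z : Fin d → ℂ) (n : Idx d) : ℂ := ∏ j, z j ^ n j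

/-! For `n ∈ ℕ^d` let `v_n(h) = D A^n h`, where `D* D = 1 - ∑_j A_j* A_j`. If `A` is a strict row
contraction, then `h ↦ (v_n(h))_n` is an isometry of `H` into `ℓ²(X, β; H)`: by Pascal's rule for
the multinomial weights `β`, the sum of `β(n) ‖v_n(h)‖²` telescopes to `‖h‖²`. This isometry
intertwines `A_j` with the backshift, so `‖Q(A)‖ ≤ ‖Q(B^X)‖`; in general one applies this to `c A`
with `|c| < 1` and lets `c → 1`. On the other side, `Q(B^X)` is the transpose of a compression of
the multiplication by any `φ` that has the same coefficients as `Q` on `X`. -/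

open Filter Topology
open scoped ENNReal lp InnerProductSpace

variable {d : ℕ}

/-! ### Multi-indices and the weight -/

lemma e_apply_self (j : Fin d) : e d j j = 1 := by simp [e]

lemma sum_add_e (n : Idx d) (j : Fin d) : ∑ i, (n + e d j) i = ∑ i, n i + 1 := by
  simp [Finset.sum_add_distrib, e]

lemma sum_smul_e (k : Idx d) : ∑ j, k j • e d j = k := by
  ext i
  simp [e]

lemma sub_e_add_e {n : Idx d} {j : Fin d} (hj : n j ≠ 0) : n - e d j + e d j = n := by
  refine tsub_add_cancel_of_le fun i => ?_
  rw [e]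
  split_ifs with h
  · exact h ▸ Nat.one_le_iff_ne_zero.mpr hj
  · exact Nat.zero_le _

theorem idx_induction {p : Idx d → Prop} (zero : p 0) (add_e : ∀ n j, p n → p (n + e d j))
    (n : Idx d) : p n := by
  let shifts : AddSubmonoid (Idx d) :=
    { carrier := {k | ∀ n, p n → p (n + k)}
      zero_mem' := fun n hn => (add_zero n).symm ▸ hn
      add_mem' := fun {k l} hk hl n hn => add_assoc n k l ▸ hl _ (hk n hn) }
  have e_mem : ∀ j, e d j ∈ shifts := fun j m => add_e m j
  have mem_shifts : n ∈ shifts := sum_smul_e n ▸ sum_mem fun j _ => nsmul_mem (e_mem j) (n j)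
  exact zero_add n ▸ mem_shifts 0 zero

lemma MonotoneSet.add_notMem {X : Set (Idx d)} (hX : MonotoneSet d X) {n : Idx d} (hn : n ∉ X)
    (k : Idx d) : n + k ∉ X := by
  induction k using idx_induction with
  | zero => simpa using hn
  | add_e k j ih => exact add_assoc n k _ ▸ hX _ ih j

lemma MonotoneSet.right_mem {X : Set (Idx d)} (hX : MonotoneSet d X) {n k : Idx d}
    (h : n + k ∈ X) : k ∈ X :=
  not_imp_not.mp (fun hk => add_comm k n ▸ hX.add_notMem hk n) h

lemma beta_pos (n : Idx d) : 0 < beta d n :=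
  div_pos (mod_cast Nat.factorial_pos _)
    (Finset.prod_pos fun j _ => mod_cast Nat.factorial_pos (n j))

lemma beta_zero : beta d 0 = 1 := by simp [beta]

lemma beta_add_e_mul (n : Idx d) (j : Fin d) :
    beta d (n + e d j) * (n j + 1) = beta d n * (∑ i, (n i : ℝ) + 1) := by
  have prod_factorial : ∏ i, (((n + e d j) i).factorial : ℝ) =
      (n j + 1) * ∏ i, ((n i).factorial : ℝ) := by
    have factor : ∀ i, (((n + e d j) i).factorial : ℝ) =
        (if i = j then (n j + 1 : ℝ) else 1) * (n i).factorial := by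
      intro i
      by_cases hij : i = j
      · simp [hij, e_apply_self, Nat.factorial_succ]
      · simp [hij, e]
    simp only [factor, Finset.prod_mul_distrib, Finset.prod_ite_eq', Finset.mem_univ, if_true]
  have prod_ne_zero : ∏ i, ((n i).factorial : ℝ) ≠ 0 :=
    Finset.prod_ne_zero_iff.mpr fun i _ => mod_cast Nat.factorial_ne_zero (n i)
  rw [beta, beta, prod_factorial, sum_add_e, Nat.factorial_succ]
  push_cast
  field_simp

lemma beta_le_beta_add_e (n : Idx d) (j : Fin d) : beta d n ≤ beta d (n + e d j) := by
  have apply_le_sum : (n j : ℝ) ≤ ∑ i, (n i : ℝ) :=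
    Finset.single_le_sum (f := fun i => (n i : ℝ)) (fun i _ => Nat.cast_nonneg _)
      (Finset.mem_univ j)
  refine le_of_mul_le_mul_right ?_ (Nat.cast_add_one_pos (α := ℝ) (n j))
  rw [beta_add_e_mul]
  exact mul_le_mul_of_nonneg_left (by linarith) (beta_pos n).le

lemma beta_le_beta_add (n k : Idx d) : beta d n ≤ beta d (n + k) := by
  induction k using idx_induction with
  | zero => simp
  | add_e k j ih => exact ih.trans (add_assoc n k (e d j) ▸ beta_le_beta_add_e (n + k) j)

lemma beta_add_e_mul_apply_div_sum (n : Idx d) (j : Fin d) :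
    beta d (n + e d j) * (n + e d j) j / ∑ i, ((n + e d j) i : ℝ) = beta d n := by
  have apply_cast : ((n + e d j) j : ℝ) = n j + 1 := by simp [e_apply_self]
  have sum_cast : ∑ i, ((n + e d j) i : ℝ) = ∑ i, (n i : ℝ) + 1 := mod_cast sum_add_e n j
  have sum_pos : (0 : ℝ) < ∑ i, (n i : ℝ) + 1 :=
    add_pos_of_nonneg_of_pos (Finset.sum_nonneg fun i _ => Nat.cast_nonneg _) one_pos
  rw [apply_cast, sum_cast, beta_add_e_mul, mul_div_cancel_right₀ _ (ne_of_gt sum_pos)]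

-- Pascal's rule `β(m) = ∑_j β(m - e_j)` for `m ≠ 0`, summed against `F`: the parent `m - e_j`
-- carries the proportion `m_j / |m|` of `β(m)`.
theorem tsum_beta_mul (F : Idx d → ℝ≥0∞) :
    ∑' m, ENNReal.ofReal (beta d m) * F m =
      F 0 + ∑' n, ENNReal.ofReal (beta d n) * ∑ j, F (n + e d j) := by
  classical
  let share (j : Fin d) (m : Idx d) : ℝ := beta d m * m j / ∑ i, (m i : ℝ)
  have share_nonneg : ∀ j m, 0 ≤ share j m := fun j m =>
    div_nonneg (mul_nonneg (beta_pos m).le (Nat.cast_nonneg _))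
      (Finset.sum_nonneg fun i _ => Nat.cast_nonneg _)
  have sum_share : ∀ m, m ≠ 0 → ∑ j, share j m = beta d m := by
    intro m hm
    obtain ⟨i, hi⟩ : ∃ i, m i ≠ 0 := Function.ne_iff.mp hm
    have sum_ne_zero : ∑ i, (m i : ℝ) ≠ 0 :=
      mod_cast fun h => hi (Finset.sum_eq_zero_iff.mp h i (Finset.mem_univ i))
    simp only [share]
    rw [← Finset.sum_div, ← Finset.mul_sum, mul_div_cancel_right₀ _ sum_ne_zero]
  have tsum_share : ∀ j, ∑' m, ENNReal.ofReal (share j m) * F m =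
      ∑' n, ENNReal.ofReal (beta d n) * F (n + e d j) := by
    intro j
    have support_subset : (Function.support fun m => ENNReal.ofReal (share j m) * F m) ⊆
        Set.range (· + e d j) :=
      fun m hm => ⟨m - e d j, sub_e_add_e fun hmj => hm (by simp [share, hmj])⟩
    rw [← (add_left_injective (e d j)).tsum_eq support_subset]
    simp only [share, beta_add_e_mul_apply_div_sum]
  have split : ∀ m, ENNReal.ofReal (beta d m) * F m =
      (if m = 0 then F 0 else 0) + ∑ j, ENNReal.ofReal (share j m) * F m := by
    intro m
    rcases eq_or_ne m 0 with rfl | hm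
    · simp [share, beta_zero]
    rw [if_neg hm, zero_add, ← Finset.sum_mul,
      ← ENNReal.ofReal_sum_of_nonneg fun j _ => share_nonneg j m, sum_share m hm]
  simp only [split, ENNReal.tsum_add, tsum_ite_eq, Finset.mul_sum,
    Summable.tsum_finsetSum fun _ _ => ENNReal.summable, tsum_share]

/-! ### Unitary models of the weighted spaces -/

/-- The unitary `ℓ²(ℕ^d) → H_d`, `x ↦ (x(n) β(n)^{1/2})_n`, on coefficient sequences. -/
def toHd (d : ℕ) : ℓ²(Idx d, ℂ) →ₗ[ℂ] Idx d → ℂ where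
  toFun x n := x n * (√(beta d n) : ℂ)
  map_add' x y := by ext n; simp [add_mul]
  map_smul' c x := by ext n; simp [mul_assoc]

/-- The antiunitary `ℓ²(ℕ^d) → ℓ²(ℕ^d, β)`, `x ↦ (conj x(n) β(n)^{-1/2})_n`. The conjugate makes
adjoints on `ℓ²(ℕ^d)` transposes for the bilinear pairing of `H_d` with `ℓ²(ℕ^d, β)`. -/
def toL2 (d : ℕ) (x : ℓ²(Idx d, ℂ)) : Idx d → ℂ := fun n => conj (x n) / (√(beta d n) : ℂ)

lemma sqrt_beta_ne_zero (n : Idx d) : (√(beta d n) : ℂ) ≠ 0 :=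
  mod_cast (Real.sqrt_pos.mpr (beta_pos n)).ne'

lemma norm_sqrt_beta_sq (n : Idx d) : ‖(√(beta d n) : ℂ)‖ ^ 2 = beta d n := by
  rw [Complex.norm_real, Real.norm_eq_abs, sq_abs, Real.sq_sqrt (beta_pos n).le]

lemma toHd_injective : Function.Injective (toHd d) := fun _ _ h =>
  lp.ext (funext fun n => mul_right_cancel₀ (sqrt_beta_ne_zero n) (congrFun h n))

lemma continuous_toHd : Continuous (toHd d) :=
  continuous_pi fun n => (lp.evalCLM ℂ (fun _ : Idx d => ℂ) 2 n).continuous.mul continuous_const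

lemma norm_toHd_sq_div_beta (x : ℓ²(Idx d, ℂ)) (n : Idx d) :
    ‖toHd d x n‖ ^ 2 / beta d n = ‖x n‖ ^ 2 := by
  simp only [toHd, LinearMap.coe_mk, AddHom.coe_mk, norm_mul, mul_pow, norm_sqrt_beta_sq,
    mul_div_cancel_right₀ _ (beta_pos n).ne']

lemma norm_toL2_sq_mul_beta (x : ℓ²(Idx d, ℂ)) (n : Idx d) :
    ‖toL2 d x n‖ ^ 2 * beta d n = ‖x n‖ ^ 2 := by
  simp only [toL2, norm_div, RCLike.norm_conj, div_pow, norm_sqrt_beta_sq,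
    div_mul_cancel₀ _ (beta_pos n).ne']

lemma memℓp_two_iff_summable_sq {ι : Type*} (f : ι → ℂ) :
    Memℓp f 2 ↔ Summable fun i => ‖f i‖ ^ 2 := by
  simp [memℓp_gen_iff (p := 2) (by norm_num)]

lemma sqrt_tsum_norm_sq {ι : Type*} (x : ℓ²(ι, ℂ)) : √(∑' i, ‖x i‖ ^ 2) = ‖x‖ := by
  simp [lp.norm_eq_tsum_rpow (p := 2) (by norm_num), Real.sqrt_eq_rpow]

theorem memHd_iff (a : Idx d → ℂ) : MemHd d a ↔ ∃ x, toHd d x = a := by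
  constructor
  · intro ha
    refine ⟨⟨fun n => a n / (√(beta d n) : ℂ), (memℓp_two_iff_summable_sq _).mpr ?_⟩,
      funext fun n => div_mul_cancel₀ _ (sqrt_beta_ne_zero n)⟩
    simpa only [MemHd, norm_div, div_pow, norm_sqrt_beta_sq] using ha
  · rintro ⟨x, rfl⟩
    simpa only [MemHd, norm_toHd_sq_div_beta] using (memℓp_two_iff_summable_sq x).mp (lp.memℓp x)

theorem hdNorm_toHd (x : ℓ²(Idx d, ℂ)) : hdNorm d (toHd d x) = ‖x‖ := by
  simp only [hdNorm, norm_toHd_sq_div_beta, sqrt_tsum_norm_sq]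

theorem memL2_iff {X : Set (Idx d)} (g : Idx d → ℂ) :
    MemL2 d X g ↔ (∀ n ∉ X, g n = 0) ∧ ∃ x, toL2 d x = g := by
  refine and_congr_right fun _ => ⟨fun hg => ?_, ?_⟩
  · refine ⟨⟨fun n => conj (g n) * (√(beta d n) : ℂ), (memℓp_two_iff_summable_sq _).mpr ?_⟩,
      funext fun n => ?_⟩
    · simpa only [norm_mul, mul_pow, norm_sqrt_beta_sq, RCLike.norm_conj] using hg
    · simp only [toL2, map_mul, Complex.conj_conj, Complex.conj_ofReal,
        mul_div_cancel_right₀ _ (sqrt_beta_ne_zero n)]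
  · rintro ⟨x, rfl⟩
    simpa only [norm_toL2_sq_mul_beta] using (memℓp_two_iff_summable_sq x).mp (lp.memℓp x)

theorem l2Norm_toL2 (x : ℓ²(Idx d, ℂ)) : l2Norm d (toL2 d x) = ‖x‖ := by
  simp only [l2Norm, norm_toL2_sq_mul_beta, sqrt_tsum_norm_sq]

theorem inner_eq_tsum_toHd_mul_toL2 (x y : ℓ²(Idx d, ℂ)) :
    ⟪x, y⟫_ℂ = ∑' n, toHd d y n * toL2 d x n := by
  rw [lp.inner_eq_tsum]
  refine tsum_congr fun n => ?_
  rw [RCLike.inner_apply, toHd, toL2, LinearMap.coe_mk, AddHom.coe_mk, mul_assoc,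
    mul_div_cancel₀ _ (sqrt_beta_ne_zero n)]

/-! ### Multipliers -/

lemma mconv_add_left (φ ψ a : Idx d → ℂ) : mconv d (φ + ψ) a = mconv d φ a + mconv d ψ a := by
  ext m
  simp [mconv, add_mul, Finset.sum_add_distrib]

lemma mconv_comm (φ a : Idx d → ℂ) : mconv d φ a = mconv d a φ := by
  ext m
  have sub_sub_self : ∀ k ∈ Finset.Iic m, m - (m - k) = k := fun k hk =>
    tsub_tsub_cancel_of_le (Finset.mem_Iic.mp hk)
  refine Finset.sum_nbij' (m - ·) (m - ·) (by simp) (by simp) sub_sub_self sub_sub_self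
    fun k hk => ?_
  rw [sub_sub_self k hk, mul_comm]

lemma mconv_add_right (φ a b : Idx d → ℂ) : mconv d φ (a + b) = mconv d φ a + mconv d φ b := by
  simp only [mconv_comm φ, mconv_add_left]

lemma mconv_smul_right (φ : Idx d → ℂ) (c : ℂ) (a : Idx d → ℂ) :
    mconv d φ (c • a) = c • mconv d φ a := by
  ext m
  simp [mconv, Finset.mul_sum, mul_left_comm]

lemma continuous_mconv (φ : Idx d → ℂ) : Continuous (mconv d φ) :=
  continuous_pi fun _ => continuous_finsetSum _ fun _ _ => continuous_const.mul (continuous_apply _)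

lemma mconv_single_add (k : Idx d) (c : ℂ) (a : Idx d → ℂ) (n : Idx d) :
    mconv d (Pi.single k c) a (n + k) = c * a n := by
  rw [mconv, Finset.sum_eq_single k (fun i _ hik => by rw [Pi.single_eq_of_ne hik, zero_mul])
    (fun hk => (hk (Finset.mem_Iic.mpr le_add_self)).elim), Pi.single_eq_same,
    add_tsub_cancel_right]

lemma mconv_single_of_notMem_range (k : Idx d) (c : ℂ) (a : Idx d → ℂ) {m : Idx d}
    (hm : m ∉ Set.range (· + k)) : mconv d (Pi.single k c) a m = 0 :=
  Finset.sum_eq_zero fun i hi => by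
    have hik : i ≠ k := by
      rintro rfl
      exact hm ⟨m - i, tsub_add_cancel_of_le (Finset.mem_Iic.mp hi)⟩
    rw [Pi.single_eq_of_ne hik, zero_mul]

lemma isMultiplier_single (k : Idx d) (c : ℂ) : IsMultiplier d (Pi.single k c) := by
  intro a ha
  refine ((add_left_injective k).summable_iff fun m hm => ?_).mp ?_
  · rw [mconv_single_of_notMem_range k c a hm, norm_zero, zero_pow two_ne_zero, zero_div]
  refine (ha.mul_left (‖c‖ ^ 2)).of_nonneg_of_le
    (fun n => div_nonneg (sq_nonneg _) (beta_pos _).le) fun n => ?_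
  rw [Function.comp_apply, mconv_single_add, norm_mul, mul_pow, mul_div_assoc]
  gcongr
  · exact beta_pos n
  · exact beta_le_beta_add n k

lemma IsMultiplier.add {φ ψ : Idx d → ℂ} (hφ : IsMultiplier d φ) (hψ : IsMultiplier d ψ) :
    IsMultiplier d (φ + ψ) := by
  intro a ha
  obtain ⟨x, hx⟩ := (memHd_iff _).mp (hφ a ha)
  obtain ⟨y, hy⟩ := (memHd_iff _).mp (hψ a ha)
  exact (memHd_iff _).mpr ⟨x + y, by rw [map_add, hx, hy, mconv_add_left]⟩

theorem isMultiplier_Qhat (Q : MvPolynomial (Fin d) ℂ) : IsMultiplier d (Qhat d Q) := by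
  induction Q using MvPolynomial.induction_on' with
  | monomial u c =>
    have Qhat_monomial : Qhat d (MvPolynomial.monomial u c) = Pi.single (⇑u) c := by
      ext n
      rw [Qhat, MvPolynomial.coeff_monomial, Pi.single_apply]
      exact if_congr (by rw [Equiv.eq_symm_apply, eq_comm]; rfl) rfl rfl
    exact Qhat_monomial ▸ isMultiplier_single u c
  | add p q hp hq =>
    have Qhat_add : Qhat d (p + q) = Qhat d p + Qhat d q :=
      funext fun n => MvPolynomial.coeff_add _ _ _
    exact Qhat_add ▸ hp.add hq

-- The graph of `x ↦ φ · x` is closed because every coefficient of `φ · x` involves only finitely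
-- many coefficients of `x`.
theorem IsMultiplier.exists_clm {φ : Idx d → ℂ} (hφ : IsMultiplier d φ) :
    ∃ M : ℓ²(Idx d, ℂ) →L[ℂ] ℓ²(Idx d, ℂ), ∀ x, toHd d (M x) = mconv d φ (toHd d x) := by
  choose M hM using fun x => (memHd_iff _).mp (hφ (toHd d x) ((memHd_iff _).mpr ⟨x, rfl⟩))
  let linM : ℓ²(Idx d, ℂ) →ₗ[ℂ] ℓ²(Idx d, ℂ) :=
    { toFun := M
      map_add' := fun x y => toHd_injective <| by simp only [hM, map_add, mconv_add_right]
      map_smul' := fun c x => toHd_injective <| by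
        simp only [hM, map_smul, mconv_smul_right, RingHom.id_apply] }
  refine ⟨⟨linM, linM.continuous_of_seq_closed_graph fun u x y hu hMu => toHd_injective ?_⟩, hM⟩
  have lim_toHd : Tendsto (fun i => toHd d (M (u i))) atTop (𝓝 (toHd d y)) :=
    (continuous_toHd.tendsto y).comp hMu
  have lim_mconv : Tendsto (fun i => mconv d φ (toHd d (u i))) atTop
      (𝓝 (mconv d φ (toHd d x))) :=
    (((continuous_mconv φ).comp continuous_toHd).tendsto x).comp hu
  simp only [hM] at lim_toHd
  exact (tendsto_nhds_unique lim_toHd lim_mconv).trans (hM x).symm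

section MultiplicationOperator

variable {φ : Idx d → ℂ} {M : ℓ²(Idx d, ℂ) →L[ℂ] ℓ²(Idx d, ℂ)}

theorem multNorm_eq_opNorm (hM : ∀ x, toHd d (M x) = mconv d φ (toHd d x)) :
    multNorm d φ = ‖M‖ := by
  rw [multNorm, ContinuousLinearMap.norm_def]
  congr! 4 with C
  simp only [memHd_iff, forall_exists_index, forall_apply_eq_imp_iff, ← hM, hdNorm_toHd]

theorem toL2_adjoint_apply (hM : ∀ x, toHd d (M x) = mconv d φ (toHd d x)) (x : ℓ²(Idx d, ℂ))
    (n : Idx d) : toL2 d (M.adjoint x) n = ∑' k, φ k * toL2 d x (n + k) := by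
  classical
  let δ : ℓ²(Idx d, ℂ) := lp.single 2 n (√(beta d n) : ℂ)⁻¹
  have toHd_δ : toHd d δ = Pi.single n 1 := by
    ext m
    rcases eq_or_ne m n with rfl | hmn
    · simpa [toHd, δ] using inv_mul_cancel₀ (sqrt_beta_ne_zero m)
    · simp [toHd, δ, hmn]
  calc toL2 d (M.adjoint x) n = ⟪M.adjoint x, δ⟫_ℂ := by
        rw [lp.inner_single_right, RCLike.inner_apply, toL2, div_eq_inv_mul]
    _ = ⟪x, M δ⟫_ℂ := ContinuousLinearMap.adjoint_inner_left M δ x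
    _ = ∑' m, mconv d (Pi.single n 1) φ m * toL2 d x m := by
        rw [inner_eq_tsum_toHd_mul_toL2, hM, toHd_δ, mconv_comm]
    _ = ∑' k, mconv d (Pi.single n 1) φ (k + n) * toL2 d x (k + n) := by
        refine ((add_left_injective n).tsum_eq fun m hm => ?_).symm
        by_contra hmn
        exact hm (mul_eq_zero_of_left (mconv_single_of_notMem_range n 1 φ hmn) _)
    _ = ∑' k, φ k * toL2 d x (n + k) := by simp only [mconv_single_add, one_mul, add_comm n]

end MultiplicationOperator

/-! ### Compressed backshifts -/

section Backshift

variable {X : Set (Idx d)}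

lemma iterate_BXop (hX : MonotoneSet d X) (j : Fin d) (r : ℕ) {g : Idx d → ℂ}
    (hg : ∀ n ∉ X, g n = 0) : (BXop d X j)^[r] g = fun n => g (n + r • e d j) := by
  induction r generalizing g with
  | zero => simp
  | succ r ih =>
    have BXop_apply : BXop d X j g = fun n => g (n + e d j) :=
      Set.indicator_eq_self.mpr fun n hn => by_contra fun hnX => hn (hg _ (hX n hnX j))
    rw [Function.iterate_succ_apply, BXop_apply, ih fun n hn => hg _ (hX n hn j)]
    simp only [succ_nsmul, add_assoc]

lemma foldr_iterate_BXop (hX : MonotoneSet d X) (k : Idx d) {g : Idx d → ℂ}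
    (hg : ∀ n ∉ X, g n = 0) (l : List (Fin d)) :
    (l.map fun j => (BXop d X j)^[k j]).foldr (· ∘ ·) id g =
      fun n => g (n + (l.map fun j => k j • e d j).sum) := by
  induction l with
  | nil => simp
  | cons j l ih =>
    simp only [List.map_cons, List.foldr_cons, Function.comp_apply, List.sum_cons]
    rw [ih, iterate_BXop hX j _ fun n hn => hg _ (hX.add_notMem hn _)]
    simp only [add_assoc]

theorem opPow_BXop (hX : MonotoneSet d X) (k : Idx d) {g : Idx d → ℂ} (hg : ∀ n ∉ X, g n = 0) :
    opPow d (BXop d X) k g = fun n => g (n + k) := by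
  rw [opPow, List.ofFn_eq_map, foldr_iterate_BXop hX k hg, ← Fin.sum_univ_def, sum_smul_e]

theorem polyOp_BXop_apply (hX : MonotoneSet d X) (Q : MvPolynomial (Fin d) ℂ) {g : Idx d → ℂ}
    (hg : ∀ n ∉ X, g n = 0) (n : Idx d) :
    polyOp d Q (BXop d X) g n = ∑ k ∈ Q.support, Q.coeff k * g (n + ⇑k) :=
  Finset.sum_congr rfl fun k _ => by rw [opPow_BXop hX _ hg]

lemma tsum_Qhat_mul (Q : MvPolynomial (Fin d) ℂ) (f : Idx d → ℂ) :
    ∑' k, Qhat d Q k * f k = ∑ k ∈ Q.support, Q.coeff k * f ⇑k := by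
  rw [← Finsupp.equivFunOnFinite.tsum_eq, tsum_eq_sum (s := Q.support) fun k hk => ?_]
  · simp only [Qhat, Equiv.symm_apply_apply]
    rfl
  · simp only [Qhat, Equiv.symm_apply_apply, MvPolynomial.notMem_support_iff.mp hk, zero_mul]

-- `Q(B^X)` is the transpose of the compression of multiplication by `φ`, as `g(n + k) ≠ 0` forces
-- `k ∈ X`, where `φ` and `Q` have the same coefficients.
theorem polyOp_BXop_toL2 (hX : MonotoneSet d X) {Q : MvPolynomial (Fin d) ℂ} {φ : Idx d → ℂ}
    (hφQ : ∀ n ∈ X, φ n = Qhat d Q n) {M : ℓ²(Idx d, ℂ) →L[ℂ] ℓ²(Idx d, ℂ)}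
    (hM : ∀ x, toHd d (M x) = mconv d φ (toHd d x)) {x : ℓ²(Idx d, ℂ)}
    (hx : ∀ n ∉ X, toL2 d x n = 0) :
    polyOp d Q (BXop d X) (toL2 d x) = toL2 d (M.adjoint x) := by
  ext n
  rw [polyOp_BXop_apply hX Q hx, toL2_adjoint_apply hM, ← tsum_Qhat_mul Q fun k => toL2 d x (n + k)]
  refine tsum_congr fun k => ?_
  by_cases hnk : n + k ∈ X
  · rw [hφQ k (hX.right_mem hnk)]
  · rw [hx _ hnk, mul_zero, mul_zero]

theorem l2Norm_polyOp_BXop_le (hX : MonotoneSet d X) {Q : MvPolynomial (Fin d) ℂ}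
    {φ : Idx d → ℂ} (hφ : IsMultiplier d φ) (hφQ : ∀ n ∈ X, φ n = Qhat d Q n) {g : Idx d → ℂ}
    (hg : MemL2 d X g) :
    l2Norm d (polyOp d Q (BXop d X) g) ≤ multNorm d φ * l2Norm d g := by
  obtain ⟨M, hM⟩ := hφ.exists_clm
  obtain ⟨hgX, x, rfl⟩ := (memL2_iff g).mp hg
  rw [polyOp_BXop_toL2 hX hφQ hM hgX, l2Norm_toL2, l2Norm_toL2, multNorm_eq_opNorm hM,
    ← ContinuousLinearMap.adjoint.norm_map M]
  exact M.adjoint.le_opNorm x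

lemma multNorm_nonneg (φ : Idx d → ℂ) : 0 ≤ multNorm d φ := Real.sInf_nonneg fun _ hC => hC.1

theorem opNormL2_polyOp_BXop_le_multNorm (hX : MonotoneSet d X) {Q : MvPolynomial (Fin d) ℂ}
    {φ : Idx d → ℂ} (hφ : IsMultiplier d φ) (hφQ : ∀ n ∈ X, φ n = Qhat d Q n) :
    opNormL2 d X (polyOp d Q (BXop d X)) ≤ multNorm d φ :=
  csInf_le ⟨0, fun _ hC => hC.1⟩
    ⟨multNorm_nonneg φ, fun _ hg => l2Norm_polyOp_BXop_le hX hφ hφQ hg⟩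

lemma le_opNormL2_polyOp_BXop (hX : MonotoneSet d X) (Q : MvPolynomial (Fin d) ℂ) {r : ℝ}
    (hr : ∀ C, 0 ≤ C →
      (∀ g, MemL2 d X g → l2Norm d (polyOp d Q (BXop d X) g) ≤ C * l2Norm d g) → r ≤ C) :
    r ≤ opNormL2 d X (polyOp d Q (BXop d X)) :=
  le_csInf ⟨_, multNorm_nonneg _, fun _ hg =>
    l2Norm_polyOp_BXop_le hX (isMultiplier_Qhat Q) (fun _ _ => rfl) hg⟩ fun C hC => hr C hC.1 hC.2

end Backshift

/-! ### Powers of commuting tuples -/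

lemma list_prod_map_mul_of_commute {ι M : Type*} [Monoid M] {f g : ι → M}
    (hfg : ∀ i j, Commute (g i) (f j)) (l : List ι) :
    (l.map fun i => f i * g i).prod = (l.map f).prod * (l.map g).prod := by
  induction l with
  | nil => simp
  | cons i l ih =>
    have comm : Commute (g i) (l.map f).prod := Commute.list_prod_right _ _ fun x hx => by
      obtain ⟨j, -, rfl⟩ := List.mem_map.mp hx
      exact hfg i j
    simp only [List.map_cons, List.prod_cons, ih, mul_assoc]
    rw [← mul_assoc (g i), comm.eq, mul_assoc]

section Powers

variable {H : Type*} [NormedAddCommGroup H] [NormedSpace ℂ H] {A : Fin d → H →L[ℂ] H}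

lemma ApowCLM_zero : ApowCLM d A 0 = 1 := by simp [ApowCLM]

lemma ApowCLM_e (A : Fin d → H →L[ℂ] H) (j : Fin d) : ApowCLM d A (e d j) = A j := by
  rw [ApowCLM, List.ofFn_eq_map, List.prod_map_eq_pow_single j _ fun i hij _ => by simp [e, hij],
    List.count_finRange, pow_one, e_apply_self, pow_one]

theorem ApowCLM_add (hA : ∀ i j, Commute (A i) (A j)) (n m : Idx d) :
    ApowCLM d A (n + m) = ApowCLM d A n * ApowCLM d A m := by
  simp only [ApowCLM, List.ofFn_eq_map, Pi.add_apply, pow_add]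
  exact list_prod_map_mul_of_commute (fun i j => (hA i j).pow_pow _ _) _

lemma ApowCLM_add_e_apply (hA : ∀ i j, Commute (A i) (A j)) (n : Idx d) (j : Fin d) (h : H) :
    ApowCLM d A (n + e d j) h = A j (ApowCLM d A n h) := by
  rw [add_comm, ApowCLM_add hA, ApowCLM_e]
  rfl

lemma ApowCLM_smul (hA : ∀ i j, Commute (A i) (A j)) (c : ℂ) (n : Idx d) :
    ApowCLM d (c • A) n = c ^ (∑ j, n j) • ApowCLM d A n := by
  have hcA : ∀ i j, Commute ((c • A) i) ((c • A) j) := fun i j =>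
    ((hA i j).smul_left c).smul_right c
  induction n using idx_induction with
  | zero => simp [ApowCLM_zero]
  | add_e n j ih =>
    rw [ApowCLM_add hcA, ApowCLM_add hA, ih, ApowCLM_e, ApowCLM_e, sum_add_e, pow_succ,
      Pi.smul_apply, smul_mul_smul_comm]

theorem monotoneSet_ApowCLM_ne_zero (hA : ∀ i j, Commute (A i) (A j)) :
    MonotoneSet d {n | ApowCLM d A n ≠ 0} := by
  intro n hn j
  rw [Set.mem_ofPred_eq, not_not] at hn ⊢
  rw [ApowCLM_add hA, hn, zero_mul]

lemma continuous_QevalCLM (Q : MvPolynomial (Fin d) ℂ) :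
    Continuous fun A : Fin d → H →L[ℂ] H => QevalCLM d A Q := by
  refine continuous_finsetSum _ fun k _ => .const_smul (c := Q.coeff k) ?_
  simp only [ApowCLM, List.ofFn_eq_map]
  exact continuous_list_prod _ fun j _ => (continuous_apply j).pow (k j)

end Powers

/-! ### Energy of a family of vectors -/

/-- The squared norm `∑_n β(n) ‖F(n)‖²` of `ℓ²(ℕ^d, β; E)`, infinite outside this space. -/
def energy {E : Type*} [NormedAddCommGroup E] (F : Idx d → E) : ℝ≥0∞ :=
  ∑' n, ENNReal.ofReal (beta d n) * ‖F n‖ₑ ^ 2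

lemma ofReal_norm_sq {E : Type*} [NormedAddCommGroup E] (x : E) :
    ENNReal.ofReal (‖x‖ ^ 2) = ‖x‖ₑ ^ 2 := by
  rw [ENNReal.ofReal_pow (norm_nonneg x), ofReal_norm]

lemma ofReal_sum_norm_sq {ι E : Type*} [Fintype ι] [NormedAddCommGroup E] (x : ι → E) :
    ENNReal.ofReal (∑ i, ‖x i‖ ^ 2) = ∑ i, ‖x i‖ₑ ^ 2 := by
  simp only [ENNReal.ofReal_sum_of_nonneg fun i _ => sq_nonneg ‖x i‖, ofReal_norm_sq]

lemma ofReal_norm_sq_mul_beta (g : Idx d → ℂ) (n : Idx d) :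
    ENNReal.ofReal (‖g n‖ ^ 2 * beta d n) = ENNReal.ofReal (beta d n) * ‖g n‖ₑ ^ 2 := by
  rw [mul_comm, ENNReal.ofReal_mul (beta_pos n).le, ofReal_norm_sq]

theorem memL2_of_energy_ne_top {X : Set (Idx d)} {g : Idx d → ℂ} (hgX : ∀ n ∉ X, g n = 0)
    (hg : energy g ≠ ⊤) : MemL2 d X g := by
  refine ⟨hgX, (ENNReal.summable_toReal hg).congr fun n => ?_⟩
  rw [← ofReal_norm_sq_mul_beta,
    ENNReal.toReal_ofReal (mul_nonneg (sq_nonneg _) (beta_pos n).le)]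

theorem energy_eq_l2Norm_sq {X : Set (Idx d)} {g : Idx d → ℂ} (hg : MemL2 d X g) :
    energy g = ENNReal.ofReal (l2Norm d g) ^ 2 := by
  have term_nonneg : ∀ n, 0 ≤ ‖g n‖ ^ 2 * beta d n := fun n =>
    mul_nonneg (sq_nonneg _) (beta_pos n).le
  rw [l2Norm, ← ENNReal.ofReal_pow (Real.sqrt_nonneg _), Real.sq_sqrt (tsum_nonneg term_nonneg),
    ENNReal.ofReal_tsum_of_nonneg term_nonneg hg.2]
  simp only [energy, ofReal_norm_sq_mul_beta]

section Hilbert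

variable {H : Type*} [NormedAddCommGroup H] [InnerProductSpace ℂ H]

lemma tsum_enorm_inner_sq {ι : Type*} (b : HilbertBasis ι ℂ H) (x : H) :
    ∑' i, ‖⟪b i, x⟫_ℂ‖ₑ ^ 2 = ‖x‖ₑ ^ 2 := by
  have parseval : HasSum (fun i => ‖⟪b i, x⟫_ℂ‖ ^ 2) (‖x‖ ^ 2) := by
    have term_eq : ∀ i, (⟪x, b i⟫_ℂ * ⟪b i, x⟫_ℂ).re = ‖⟪b i, x⟫_ℂ‖ ^ 2 := fun i => by
      rw [← RCLike.re_eq_complex_re, inner_mul_symm_re_eq_norm, norm_mul, norm_inner_symm x, sq]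
    have re_inner_self : (⟪x, x⟫_ℂ).re = ‖x‖ ^ 2 := (norm_sq_eq_re_inner (𝕜 := ℂ) x).symm
    simpa only [term_eq, re_inner_self] using Complex.hasSum_re (b.hasSum_inner_mul_inner x x)
  rw [← ofReal_norm_sq x, ← parseval.tsum_eq,
    ENNReal.ofReal_tsum_of_nonneg (fun i => sq_nonneg _) parseval.summable]
  simp only [ofReal_norm_sq]

theorem tsum_energy_inner {ι : Type*} (b : HilbertBasis ι ℂ H) (F : Idx d → H) :
    ∑' i, energy (fun n => ⟪b i, F n⟫_ℂ) = energy F := by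
  simp only [energy]
  rw [ENNReal.tsum_comm]
  simp only [ENNReal.tsum_mul_left, tsum_enorm_inner_sq]

end Hilbert

/-! ### Dilation of a strict row contraction -/

section Orbit

variable {H : Type*} [NormedAddCommGroup H] [NormedSpace ℂ H] {T : Fin d → H →L[ℂ] H}

lemma tsum_beta_mul_truncated_orbit_le (hT : ∀ i j, Commute (T i) (T j)) {ρ : ℝ≥0∞}
    (hρ : ∀ h, ∑ j, ‖T j h‖ₑ ^ 2 ≤ ρ * ‖h‖ₑ ^ 2) (h : H) (N : ℕ) :
    ∑' n, ENNReal.ofReal (beta d n) * (if ∑ j, n j < N then ‖ApowCLM d T n h‖ₑ ^ 2 else 0) ≤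
      (∑ k ∈ Finset.range N, ρ ^ k) * ‖h‖ₑ ^ 2 := by
  let f (N : ℕ) (n : Idx d) : ℝ≥0∞ := if ∑ j, n j < N then ‖ApowCLM d T n h‖ₑ ^ 2 else 0
  have sum_f_add_e_le : ∀ N n, ∑ j, f (N + 1) (n + e d j) ≤ ρ * f N n := by
    intro N n
    simp only [f, sum_add_e, add_lt_add_iff_right, ApowCLM_add_e_apply hT]
    split_ifs
    · exact hρ _
    · simp
  change ∑' n, ENNReal.ofReal (beta d n) * f N n ≤ _
  induction N with
  | zero => simp [f]
  | succ N ih =>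
    calc ∑' n, ENNReal.ofReal (beta d n) * f (N + 1) n
        = ‖h‖ₑ ^ 2 + ∑' n, ENNReal.ofReal (beta d n) * ∑ j, f (N + 1) (n + e d j) := by
          rw [tsum_beta_mul]
          simp [f, ApowCLM_zero]
      _ ≤ ‖h‖ₑ ^ 2 + ∑' n, ENNReal.ofReal (beta d n) * (ρ * f N n) := by
          gcongr with n
          exact sum_f_add_e_le N n
      _ ≤ ‖h‖ₑ ^ 2 + ρ * ((∑ k ∈ Finset.range N, ρ ^ k) * ‖h‖ₑ ^ 2) := by
          simp only [mul_left_comm _ ρ, ENNReal.tsum_mul_left]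
          gcongr
      _ = (∑ k ∈ Finset.range (N + 1), ρ ^ k) * ‖h‖ₑ ^ 2 := by
          rw [geom_sum_succ]
          ring

theorem energy_orbit_le (hT : ∀ i j, Commute (T i) (T j)) {ρ : ℝ≥0∞}
    (hρ : ∀ h, ∑ j, ‖T j h‖ₑ ^ 2 ≤ ρ * ‖h‖ₑ ^ 2) (h : H) :
    energy (fun n => ApowCLM d T n h) ≤ (1 - ρ)⁻¹ * ‖h‖ₑ ^ 2 := by
  rw [energy, ENNReal.tsum_eq_iSup_sum]
  refine iSup_le fun s => ?_
  let N := s.sup (fun n => ∑ j, n j) + 1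
  have degree_lt : ∀ n ∈ s, ∑ j, n j < N := fun n hn =>
    Nat.lt_succ_of_le (Finset.le_sup (f := fun n : Idx d => ∑ j, n j) hn)
  calc ∑ n ∈ s, ENNReal.ofReal (beta d n) * ‖ApowCLM d T n h‖ₑ ^ 2
      = ∑ n ∈ s, ENNReal.ofReal (beta d n) *
          (if ∑ j, n j < N then ‖ApowCLM d T n h‖ₑ ^ 2 else 0) :=
        Finset.sum_congr rfl fun n hn => by rw [if_pos (degree_lt n hn)]
    _ ≤ (∑ k ∈ Finset.range N, ρ ^ k) * ‖h‖ₑ ^ 2 :=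
        (ENNReal.sum_le_tsum s).trans (tsum_beta_mul_truncated_orbit_le hT hρ h N)
    _ ≤ (1 - ρ)⁻¹ * ‖h‖ₑ ^ 2 := by
        gcongr
        exact (ENNReal.sum_le_tsum _).trans_eq (ENNReal.tsum_geometric ρ)

-- Pascal's rule makes the sum of the identities `‖D T^n h‖² = ‖T^n h‖² - ∑_j ‖T_j T^n h‖²`
-- telescope.
theorem energy_defect_orbit (hT : ∀ i j, Commute (T i) (T j)) {D : H →L[ℂ] H}
    (hD : ∀ x, ‖D x‖ₑ ^ 2 + ∑ j, ‖T j x‖ₑ ^ 2 = ‖x‖ₑ ^ 2) {h : H}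
    (hfin : energy (fun n => ApowCLM d T n h) ≠ ⊤) :
    energy (fun n => D (ApowCLM d T n h)) = ‖h‖ₑ ^ 2 := by
  let tail : ℝ≥0∞ :=
    ∑' n, ENNReal.ofReal (beta d n) * ∑ j, ‖ApowCLM d T (n + e d j) h‖ₑ ^ 2
  have pascal : energy (fun n => ApowCLM d T n h) = ‖h‖ₑ ^ 2 + tail := by
    rw [energy, tsum_beta_mul, ApowCLM_zero, one_apply_eq_self]
  have defect : energy (fun n => ApowCLM d T n h) =
      energy (fun n => D (ApowCLM d T n h)) + tail := by
    simp only [energy, tail, ← ENNReal.tsum_add, ← mul_add, ApowCLM_add_e_apply hT, hD]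
  have tail_ne_top : tail ≠ ⊤ := ne_top_of_le_ne_top hfin (pascal ▸ le_add_self)
  exact (ENNReal.add_left_inj tail_ne_top).mp (defect.symm.trans pascal)

end Orbit

section Dilation

variable {H : Type*} [NormedAddCommGroup H] [InnerProductSpace ℂ H]

lemma exists_defect [CompleteSpace H] {ι : Type*} [Fintype ι] {T : ι → H →L[ℂ] H}
    (hT : ∀ h, ∑ j, ‖T j h‖ ^ 2 ≤ ‖h‖ ^ 2) :
    ∃ D : H →L[ℂ] H, ∀ x, ‖D x‖ ^ 2 + ∑ j, ‖T j x‖ ^ 2 = ‖x‖ ^ 2 := by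
  let S : H →L[ℂ] H := 1 - ∑ j, star (T j) * T j
  have inner_star_mul_self : ∀ (B : H →L[ℂ] H) x, ⟪(star B * B) x, x⟫_ℂ = (‖B x‖ ^ 2 : ℝ) := by
    intro B x
    rw [ContinuousLinearMap.star_eq_adjoint, mul_apply_eq_comp,
      ContinuousLinearMap.adjoint_inner_left, inner_self_eq_norm_sq_to_K, Complex.ofReal_pow]
    rfl
  have inner_S : ∀ x, ⟪S x, x⟫_ℂ = (‖x‖ ^ 2 - ∑ j, ‖T j x‖ ^ 2 : ℝ) := by
    intro x
    simp only [S, sub_apply, one_apply_eq_self, sum_apply, inner_sub_left, sum_inner,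
      inner_star_mul_self, inner_self_eq_norm_sq_to_K]
    push_cast
    rfl
  have S_nonneg : 0 ≤ S := by
    rw [ContinuousLinearMap.nonneg_iff_isPositive, ContinuousLinearMap.isPositive_iff_complex]
    intro x
    rw [inner_S, RCLike.re_eq_complex_re, Complex.ofReal_re]
    exact ⟨rfl, sub_nonneg.mpr (hT x)⟩
  obtain ⟨D, hD⟩ := CStarAlgebra.nonneg_iff_eq_star_mul_self.mp S_nonneg
  refine ⟨D, fun x => ?_⟩
  have norm_D_sq : ‖D x‖ ^ 2 = ‖x‖ ^ 2 - ∑ j, ‖T j x‖ ^ 2 :=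
    Complex.ofReal_injective (by rw [← inner_star_mul_self, ← hD, inner_S])
  rw [norm_D_sq, sub_add_cancel]

variable {T : Fin d → H →L[ℂ] H}

/-- The matrix coefficients `n ↦ ⟪v, T^n h⟫` of a tuple `T`: a scalar component of the dilation of
`h`. -/
def orbitCoeff (T : Fin d → H →L[ℂ] H) (v h : H) : Idx d → ℂ := fun n => ⟪v, ApowCLM d T n h⟫_ℂ

theorem exists_tsum_energy_orbitCoeff [CompleteSpace H] (hT : ∀ i j, Commute (T i) (T j))
    {ρ : ℝ≥0∞} (hρ1 : ρ < 1) (hρ : ∀ h, ∑ j, ‖T j h‖ₑ ^ 2 ≤ ρ * ‖h‖ₑ ^ 2) :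
    ∃ (w : Set H) (v : w → H), ∀ h, ∑' i, energy (orbitCoeff T (v i) h) = ‖h‖ₑ ^ 2 := by
  have row_contraction : ∀ h, ∑ j, ‖T j h‖ ^ 2 ≤ ‖h‖ ^ 2 := fun h => by
    rw [← ENNReal.ofReal_le_ofReal_iff (sq_nonneg _), ofReal_sum_norm_sq, ofReal_norm_sq]
    exact (hρ h).trans (mul_le_of_le_one_left' hρ1.le)
  obtain ⟨D, hD⟩ := exists_defect row_contraction
  have hD_enorm : ∀ x, ‖D x‖ₑ ^ 2 + ∑ j, ‖T j x‖ₑ ^ 2 = ‖x‖ₑ ^ 2 := fun x => by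
    rw [← ofReal_norm_sq, ← ofReal_sum_norm_sq, ← ENNReal.ofReal_add (sq_nonneg _)
      (Finset.sum_nonneg fun _ _ => sq_nonneg _), hD, ofReal_norm_sq]
  have energy_ne_top : ∀ h, energy (fun n => ApowCLM d T n h) ≠ ⊤ := fun h =>
    ne_top_of_le_ne_top (ENNReal.mul_ne_top (ENNReal.inv_ne_top.mpr (tsub_pos_of_lt hρ1).ne')
      (ENNReal.pow_ne_top enorm_ne_top)) (energy_orbit_le hT hρ h)
  obtain ⟨w, b, -⟩ := exists_hilbertBasis ℂ H
  refine ⟨w, fun i => D.adjoint (b i), fun h => ?_⟩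
  have orbitCoeff_adjoint : ∀ i,
      orbitCoeff T (D.adjoint (b i)) h = fun n => ⟪b i, D (ApowCLM d T n h)⟫_ℂ :=
    fun i => funext fun n => D.adjoint_inner_left _ _
  simp only [orbitCoeff_adjoint]
  rw [tsum_energy_inner, energy_defect_orbit hT hD_enorm (energy_ne_top h)]

theorem polyOp_BXop_orbitCoeff (hT : ∀ i j, Commute (T i) (T j)) {X : Set (Idx d)}
    (hX : MonotoneSet d X) (hTX : ∀ n ∉ X, ApowCLM d T n = 0) (Q : MvPolynomial (Fin d) ℂ)
    (v h : H) :
    polyOp d Q (BXop d X) (orbitCoeff T v h) = orbitCoeff T v (QevalCLM d T Q h) := by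
  ext n
  rw [polyOp_BXop_apply hX Q fun n hn => by simp [orbitCoeff, hTX n hn]]
  simp [orbitCoeff, QevalCLM, ApowCLM_add hT]

theorem norm_QevalCLM_le_of_strict [CompleteSpace H] (hT : ∀ i j, Commute (T i) (T j)) {ρ : ℝ≥0∞}
    (hρ1 : ρ < 1) (hρ : ∀ h, ∑ j, ‖T j h‖ₑ ^ 2 ≤ ρ * ‖h‖ₑ ^ 2) {X : Set (Idx d)}
    (hX : MonotoneSet d X) (hTX : ∀ n ∉ X, ApowCLM d T n = 0) {Q : MvPolynomial (Fin d) ℂ} {C : ℝ}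
    (hC : 0 ≤ C)
    (hQC : ∀ g, MemL2 d X g → l2Norm d (polyOp d Q (BXop d X) g) ≤ C * l2Norm d g) :
    ‖QevalCLM d T Q‖ ≤ C := by
  obtain ⟨w, v, hv⟩ := exists_tsum_energy_orbitCoeff hT hρ1 hρ
  have memL2 : ∀ i h, MemL2 d X (orbitCoeff T (v i) h) := fun i h =>
    memL2_of_energy_ne_top (fun n hn => by simp [orbitCoeff, hTX n hn]) <|
      ne_top_of_le_ne_top (ENNReal.pow_ne_top enorm_ne_top) ((ENNReal.le_tsum i).trans_eq (hv h))
  refine ContinuousLinearMap.opNorm_le_bound _ hC fun h => ?_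
  have energy_le : ∀ i, energy (orbitCoeff T (v i) (QevalCLM d T Q h)) ≤
      ENNReal.ofReal C ^ 2 * energy (orbitCoeff T (v i) h) := by
    intro i
    rw [energy_eq_l2Norm_sq (memL2 i _), energy_eq_l2Norm_sq (memL2 i _), ← mul_pow,
      ← ENNReal.ofReal_mul hC, ← polyOp_BXop_orbitCoeff hT hX hTX]
    gcongr
    exact hQC _ (memL2 i h)
  have enorm_sq_le : ‖QevalCLM d T Q h‖ₑ ^ 2 ≤ ENNReal.ofReal (C * ‖h‖) ^ 2 := by
    rw [← hv, ENNReal.ofReal_mul hC, ofReal_norm, mul_pow, ← hv h, ← ENNReal.tsum_mul_left]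
    exact ENNReal.tsum_le_tsum energy_le
  rw [← ENNReal.ofReal_le_ofReal_iff (by positivity), ofReal_norm]
  exact (ENNReal.pow_le_pow_left_iff two_ne_zero).mp enorm_sq_le

theorem norm_QevalCLM_le [CompleteSpace H] {A : Fin d → H →L[ℂ] H}
    (hA : ∀ i j, Commute (A i) (A j)) (hrow : ∀ h, ∑ j, ‖A j h‖ ^ 2 ≤ ‖h‖ ^ 2) {X : Set (Idx d)}
    (hX : MonotoneSet d X) (hAX : ∀ n ∉ X, ApowCLM d A n = 0) {Q : MvPolynomial (Fin d) ℂ} {C : ℝ}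
    (hC : 0 ≤ C)
    (hQC : ∀ g, MemL2 d X g → l2Norm d (polyOp d Q (BXop d X) g) ≤ C * l2Norm d g) :
    ‖QevalCLM d A Q‖ ≤ C := by
  let admissible : Set ℂ := {c | ‖QevalCLM d (c • A) Q‖ ≤ C}
  have admissible_closed : IsClosed admissible := isClosed_le
    ((continuous_QevalCLM Q).comp (continuous_id.smul continuous_const)).norm continuous_const
  have ball_subset : Metric.ball 0 1 ⊆ admissible := by
    intro c hc
    have hc_enorm : ‖c‖ₑ ^ 2 < 1 := by
      rw [← ofReal_norm_sq, ENNReal.ofReal_lt_one]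
      exact pow_lt_one₀ (norm_nonneg c) (mem_ball_zero_iff.mp hc) two_ne_zero
    refine norm_QevalCLM_le_of_strict (T := c • A)
      (fun i j => ((hA i j).smul_left c).smul_right c) hc_enorm (fun h => ?_) hX
      (fun n hn => by rw [ApowCLM_smul hA, hAX n hn, smul_zero]) hC hQC
    simp only [Pi.smul_apply, smul_apply, enorm_smul, mul_pow,
      ← Finset.mul_sum, ← ofReal_sum_norm_sq, ← ofReal_norm_sq h]
    gcongr
    exact hrow h
  have one_mem : (1 : ℂ) ∈ admissible :=
    closure_minimal ball_subset admissible_closed (by simp [closure_ball (0 : ℂ) one_ne_zero])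
  simpa only [admissible, Set.mem_ofPred_eq, one_smul] using one_mem

end Dilation

theorem drury_inequality_general (d : ℕ) {H : Type*} [NormedAddCommGroup H]
    [InnerProductSpace ℂ H] [CompleteSpace H] (A : Fin d → H →L[ℂ] H)
    (hcomm : ∀ i j, A i ∘L A j = A j ∘L A i)
    (hrow : ∀ h : H, ∑ j, ‖A j h‖ ^ 2 ≤ ‖h‖ ^ 2)
    (X : Set (Idx d)) (hX : MonotoneSet d X) (hAX : ∀ n ∉ X, ApowCLM d A n = 0)
    (Q : MvPolynomial (Fin d) ℂ) :
    ‖QevalCLM d A Q‖ ≤ opNormL2 d X (polyOp d Q (BXop d X)) ∧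
    opNormL2 d X (polyOp d Q (BXop d X)) ≤
      sInf {r : ℝ | ∃ φ : Idx d → ℂ, IsMultiplier d φ ∧
        (∀ n ∈ X, φ n = Qhat d Q n) ∧ r = multNorm d φ} := by
  constructor
  · exact le_opNormL2_polyOp_BXop hX Q fun C hC hQC => norm_QevalCLM_le hcomm hrow hX hAX hC hQC
  · refine le_csInf ⟨_, Qhat d Q, isMultiplier_Qhat Q, fun _ _ => rfl, rfl⟩ ?_
    rintro _ ⟨φ, hφ, hφQ, rfl⟩
    exact opNormL2_polyOp_BXop_le_multNorm hX hφ hφQ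

/-- **Drury-type inequality.** Let `A = (A_1,…,A_d)`, `d ≥ 2`, be a commuting
row contraction on a complex Hilbert space `H`, let `N = {n : A^n = 0}` and `X = ℕ^d ∖ N`.
Then for every complex polynomial `Q` of `d` variables,
`‖Q(A)‖ ≤ ‖Q(B^X)‖ ≤ inf{‖φ‖_{M(H_d)} : φ multiplier of H_d, φ̂(n) = Q̂(n) ∀ n ∈ X}`. -/
theorem drury_inequality (d : ℕ) (hd : 2 ≤ d) {H : Type*} [NormedAddCommGroup H]
    [InnerProductSpace ℂ H] [CompleteSpace H] (A : Fin d → H →L[ℂ] H)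
    (hcomm : ∀ i j, A i ∘L A j = A j ∘L A i)
    (hrow : ∀ h : H, ∑ j, ‖A j h‖ ^ 2 ≤ ‖h‖ ^ 2)
    (X : Set (Idx d)) (hXdef : X = {n : Idx d | ApowCLM d A n ≠ 0})
    (Q : MvPolynomial (Fin d) ℂ) :
    ‖QevalCLM d A Q‖ ≤ opNormL2 d X (polyOp d Q (BXop d X)) ∧
    opNormL2 d X (polyOp d Q (BXop d X)) ≤
      sInf {r : ℝ | ∃ φ : Idx d → ℂ, IsMultiplier d φ ∧
        (∀ n ∈ X, φ n = Qhat d Q n) ∧ r = multNorm d φ} :=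
  hXdef ▸ drury_inequality_general d A hcomm hrow _ (monotoneSet_ApowCLM_ne_zero hcomm)
    (fun _ => not_not.mp) Q

end DruryArveson
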